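/- arXiv:1504.03026 — 2 statements merged into one kernel-verified Lean document; each statement's English description precedes it below -/
import Mathlib

section
/- For any graph function α and any vertex v, the momentum satisfies m_v ≤ max{0, max over edges (u,v) of G with y_u < y_v of (m_u + ρ_u^R + x_u − x_v)}. -/
open Filter Topology

variable {V : Type*}

/-- Maximum weight of an edge leaving `v` (as a supremum over the finite edge set). -/
noncomputable def outMax (E : V → V → Prop) (α : V → V → ℝ) (v : V) : ℝ :=
  sSup {x : ℝ | ∃ w, E v w ∧ x = α v w}

/-- Maximum weight of an edge entering `v`. -/
noncomputable def inMax (E : V → V → Prop) (α : V → V → ℝ) (v : V) : ℝ :=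
  sSup {x : ℝ | ∃ u, E u v ∧ x = α u v}

/-- A graph function is balanced if the max outgoing weight equals the max incoming
weight at every vertex. -/
def IsBalancedGF (E : V → V → Prop) (α : V → V → ℝ) : Prop :=
  ∀ v, outMax E α v = inMax E α v

/-- Raising imbalance at `v`. -/
noncomputable def rhoR (E : V → V → Prop) (α : V → V → ℝ) (v : V) : ℝ :=
  max 0 (outMax E α v - inMax E α v)

/-- Lowering imbalance at `v`. -/
noncomputable def rhoL (E : V → V → Prop) (α : V → V → ℝ) (v : V) : ℝ :=
  max 0 (inMax E α v - outMax E α v)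

/-- A balancing operation at `v`: add `(α_v^out − α_v^in)/2` to every edge entering `v`
and subtract the same quantity from every edge leaving `v` (a self-loop is unchanged). -/
noncomputable def balanceAt [DecidableEq V] (E : V → V → Prop) (α : V → V → ℝ) (v : V) :
    V → V → ℝ :=
  fun a b =>
    α a b + (if b = v then (outMax E α v - inMax E α v) / 2 else 0)
          - (if a = v then (outMax E α v - inMax E α v) / 2 else 0)

/-- A raising operation at `v`: balance at `v` if the raising imbalance is positive,
otherwise do nothing. -/
noncomputable def raiseOp [DecidableEq V] (E : V → V → Prop) (α : V → V → ℝ) (v : V) :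
    V → V → ℝ :=
  if 0 < rhoR E α v then balanceAt E α v else α

/-- A lowering operation at `v`: balance at `v` if the lowering imbalance is positive,
otherwise do nothing. -/
noncomputable def lowerOp [DecidableEq V] (E : V → V → Prop) (α : V → V → ℝ) (v : V) :
    V → V → ℝ :=
  if 0 < rhoL E α v then balanceAt E α v else α

/-- A sequence of vertices is fair if every vertex appears infinitely often. -/
def Fair (σ : ℕ → V) : Prop := ∀ (v : V) (N : ℕ), ∃ t, N ≤ t ∧ σ t = v

/-- State after `t` raising operations along the sequence `σ`. -/
noncomputable def raiseIter [DecidableEq V] (E : V → V → Prop) (α : V → V → ℝ)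
    (σ : ℕ → V) : ℕ → V → V → ℝ
  | 0 => α
  | t + 1 => raiseOp E (raiseIter E α σ t) (σ t)

/-- State after `t` lowering operations along the sequence `σ`. -/
noncomputable def lowerIter [DecidableEq V] (E : V → V → Prop) (α : V → V → ℝ)
    (σ : ℕ → V) : ℕ → V → V → ℝ
  | 0 => α
  | t + 1 => lowerOp E (lowerIter E α σ t) (σ t)

/-- The raising vector: cumulative amount by which each vertex has been raised after
`t` raising operations along `σ`. -/
noncomputable def rvec [DecidableEq V] (E : V → V → Prop) (α : V → V → ℝ)
    (σ : ℕ → V) : ℕ → V → ℝ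
  | 0 => fun _ => 0
  | t + 1 => fun u =>
      rvec E α σ t u + (if u = σ t then rhoR E (raiseIter E α σ t) (σ t) / 2 else 0)

/-- State after performing raising operations along a finite list of vertices. -/
noncomputable def raiseList [DecidableEq V] (E : V → V → Prop) :
    (V → V → ℝ) → List V → V → V → ℝ
  | α, [] => α
  | α, v :: l => raiseList E (raiseOp E α v) l

/-- Raising vector accumulated along a finite list of raising operations. -/
noncomputable def rvecList [DecidableEq V] (E : V → V → Prop) :
    (V → V → ℝ) → List V → V → ℝ
  | _, [] => fun _ => 0
  | α, v :: l => fun u =>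
      (if u = v then rhoR E α v / 2 else 0) + rvecList E (raiseOp E α v) l u

/-- State after performing (unconditional) balancing operations along a list. -/
noncomputable def balList [DecidableEq V] (E : V → V → Prop) :
    (V → V → ℝ) → List V → V → V → ℝ
  | α, [] => α
  | α, v :: l => balList E (balanceAt E α v) l

/-- State after `t` balancing operations along the sequence `σ`. -/
noncomputable def balIter [DecidableEq V] (E : V → V → Prop) (α : V → V → ℝ)
    (σ : ℕ → V) : ℕ → V → V → ℝ
  | 0 => α
  | t + 1 => balanceAt E (balIter E α σ t) (σ t)

/-- Two graph functions are equivalent if their sums around every directed cycle agree. -/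
def Equivalent (E : V → V → Prop) (α γ : V → V → ℝ) : Prop :=
  ∀ (k : ℕ) (f : ZMod (k + 1) → V), (∀ i, E (f i) (f (i + 1))) →
    (∑ i, α (f i) (f (i + 1))) = ∑ i, γ (f i) (f (i + 1))

/-- The raising-balanced graph function determined by the limiting raising vector. -/
noncomputable def alphaR (α : V → V → ℝ) (rstar : V → ℝ) : V → V → ℝ :=
  fun u v => α u v + rstar v - rstar u

/-- Height of a vertex: `y_v = -r*_v`. -/
noncomputable def height (rstar : V → ℝ) (v : V) : ℝ := -rstar v

/-- Level of a vertex: maximum over incoming edges of `α^R`. -/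
noncomputable def level (E : V → V → Prop) (α : V → V → ℝ) (rstar : V → ℝ) (v : V) : ℝ :=
  inMax E (alphaR α rstar) v

/-- Momentum of a vertex: `m_v = max over edges (u,v) entering v of (α_{uv} − x_v)`. -/
noncomputable def momentum (E : V → V → Prop) (α : V → V → ℝ) (rstar : V → ℝ) (v : V) : ℝ :=
  sSup {c : ℝ | ∃ u, E u v ∧ c = α u v - level E α rstar v}

/-!
An edge `(u, v)` whose tail is not below its head has `α u v ≤ α^R u v ≤ x_v`, because `α^R` only
adds the nonnegative height difference. An edge whose tail is below its head is controlled by the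
tail: `α u v ≤ α_u^out ≤ α_u^in + ρ_u^R = m_u + x_u + ρ_u^R`. Subtracting `x_v` and taking the
maximum over the edges entering `v` bounds `m_v`.
-/

theorem le_csSup_of_finite {ι β : Type*} [ConditionallyCompleteLattice β] {p : ι → Prop}
    (hp : {i | p i}.Finite) (f : ι → β) {i : ι} (hi : p i) :
    f i ≤ sSup {x | ∃ j, p j ∧ x = f j} := by
  have : Nonempty β := ⟨f i⟩
  have hbdd : BddAbove {x | ∃ j, p j ∧ x = f j} := by
    simpa only [Set.image, Set.mem_ofPred_eq, eq_comm] using (hp.image f).bddAbove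
  exact le_csSup hbdd ⟨i, hi, rfl⟩

section Edges

variable {E : V → V → Prop} {u v : V}

theorem le_outMax (hfin : {w | E u w}.Finite) (α : V → V → ℝ) (huv : E u v) :
    α u v ≤ outMax E α u :=
  le_csSup_of_finite hfin (α u) huv

theorem le_inMax (hfin : {w | E w v}.Finite) (α : V → V → ℝ) (huv : E u v) :
    α u v ≤ inMax E α v :=
  le_csSup_of_finite hfin (α · v) huv

theorem outMax_le_inMax_add_rhoR (E : V → V → Prop) (α : V → V → ℝ) (v : V) :
    outMax E α v ≤ inMax E α v + rhoR E α v :=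
  sub_le_iff_le_add'.mp (le_max_right _ _)

theorem inMax_le_momentum_add_level (hfin : {w | E w v}.Finite) (hin : ∃ w, E w v)
    (α : V → V → ℝ) (r : V → ℝ) :
    inMax E α v ≤ momentum E α r v + level E α r v := by
  obtain ⟨w₀, hw₀⟩ := hin
  refine csSup_le ⟨_, w₀, hw₀, rfl⟩ ?_
  rintro _ ⟨w, hwv, rfl⟩
  exact sub_le_iff_le_add.mp (le_csSup_of_finite hfin (fun w => α w v - level E α r v) hwv)

theorem le_alphaR_of_height_le {r : V → ℝ} (α : V → V → ℝ) (h : height r v ≤ height r u) :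
    α u v ≤ alphaR α r u v := by
  unfold height at h
  unfold alphaR
  linarith

theorem le_level_of_height_le {r : V → ℝ} (hfin : {w | E w v}.Finite) (α : V → V → ℝ)
    (huv : E u v) (h : height r v ≤ height r u) :
    α u v ≤ level E α r v :=
  (le_alphaR_of_height_le α h).trans (le_inMax hfin (alphaR α r) huv)

theorem le_momentum_add_rhoR_add_level (houtfin : {w | E u w}.Finite)
    (hinfin : {w | E w u}.Finite) (hin : ∃ w, E w u) (α : V → V → ℝ) (r : V → ℝ)
    (huv : E u v) :
    α u v ≤ momentum E α r u + rhoR E α u + level E α r u :=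
  calc
    α u v ≤ outMax E α u := le_outMax houtfin α huv
    _ ≤ inMax E α u + rhoR E α u := outMax_le_inMax_add_rhoR E α u
    _ ≤ momentum E α r u + level E α r u + rhoR E α u := by
      gcongr
      exact inMax_le_momentum_add_level hinfin hin α r
    _ = momentum E α r u + rhoR E α u + level E α r u := add_right_comm _ _ _

end Edges

theorem momentum_local_bound_general
    [DecidableEq V] (E : V → V → Prop)
    (houtfin : ∀ v, {w | E v w}.Finite) (hinfin : ∀ v, {u | E u v}.Finite)
    (hin : ∀ v, ∃ u, E u v)
    (α : V → V → ℝ) (rstar : V → ℝ)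
    (_hrstar : ∀ σ : ℕ → V, Fair σ → ∀ v,
      Tendsto (fun t => rvec E α σ t v) atTop (nhds (rstar v)))
    (v : V) :
    momentum E α rstar v ≤
      max 0 (sSup {c : ℝ | ∃ u, E u v ∧ height rstar u < height rstar v ∧
        c = momentum E α rstar u + rhoR E α u +
            level E α rstar u - level E α rstar v}) := by
  obtain ⟨u₀, hu₀⟩ := hin v
  refine csSup_le ⟨_, u₀, hu₀, rfl⟩ ?_
  rintro _ ⟨u, huv, rfl⟩
  rcases le_or_gt (height rstar v) (height rstar u) with hle | hlt
  · exact le_max_of_le_left (sub_nonpos.mpr (le_level_of_height_le (hinfin v) α huv hle))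
  · have hlowfin : {w | E w v ∧ height rstar w < height rstar v}.Finite :=
      (hinfin v).subset fun _ hw => hw.1
    have hedge : α u v - level E α rstar v ≤
        momentum E α rstar u + rhoR E α u + level E α rstar u - level E α rstar v :=
      sub_le_sub_right
        (le_momentum_add_rhoR_add_level (houtfin u) (hinfin u) (hin u) α rstar huv) _
    refine le_max_of_le_right (hedge.trans ?_)
    simpa only [and_assoc] using le_csSup_of_finite hlowfin
      (fun w => momentum E α rstar w + rhoR E α w + level E α rstar w - level E α rstar v)
      ⟨huv, hlt⟩

/-- `m_v ≤ max{0, max over edges (u,v) with y_u < y_v of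
(m_u + ρ_u^R + x_u − x_v)}`. -/
theorem momentum_local_bound
    [Fintype V] [Nonempty V] [DecidableEq V] (E : V → V → Prop)
    (hout : ∀ v, ∃ w, E v w) (hin : ∀ v, ∃ u, E u v)
    (hconn : ∀ u v : V, Relation.ReflTransGen E u v)
    (α : V → V → ℝ) (rstar : V → ℝ)
    (hrstar : ∀ σ : ℕ → V, Fair σ → ∀ v,
      Tendsto (fun t => rvec E α σ t v) atTop (nhds (rstar v)))
    (v : V) :
    momentum E α rstar v ≤
      max 0 (sSup {c : ℝ | ∃ u, E u v ∧ height rstar u < height rstar v ∧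
        c = momentum E α rstar u + rhoR E α u +
            level E α rstar u - level E α rstar v}) :=
  momentum_local_bound_general E (fun _ => Set.toFinite _) (fun _ => Set.toFinite _) hin
    α rstar hrstar v
end

section
/- For any graph function α and any vertex v, the heights satisfy y_v − y_min ≤ |S_v| · ρ(S_v), where y_min = min_u y_u. -/
open Filter Topology

variable {V : Type*}

/-!
The limit `r*` is the least nonnegative vector `r` making `alphaR α r` raising-balanced. Let
`S = {u | r*_v < r*_u}`, which is `S_v` in terms of heights, be nonempty and let `x` be the largest
level on `S`. If no edge of `α^R`-weight at least `x` left `S`, then `r*` could be decreased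
slightly on some nonempty set of vertices of level `x` in `S` and stay balancing, against leastness.
Let `(u, w)` be such an edge: then `r*_u - r*_v ≤ α_{uw} - x`. Following heaviest incoming edges of
`α` backwards from `u` through vertices of increasing `r*`, until their weight drops to `x`, bounds
the right-hand side by `ρ(S)`. So from `v` a height decrease of at most `ρ(S_v)` reaches a vertex
`u` with `S_u ⊂ S_v`, and at most `|S_v|` such steps lead to the minimum.
-/

/-- The graph functions on which no raising operation acts. -/
def IsRaisingBalanced (E : V → V → Prop) (β : V → V → ℝ) : Prop :=
  ∀ v, rhoR E β v = 0

/-- The nonnegative raising vectors which turn `α` into a raising-balanced graph function. The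
limit `r*` is the least of them in the pointwise order. -/
def balancingVectors (E : V → V → Prop) (α : V → V → ℝ) : Set (V → ℝ) :=
  {r | 0 ≤ r ∧ IsRaisingBalanced E (alphaR α r)}

section Imbalance

variable {E : V → V → Prop} {β : V → V → ℝ} {u v w : V}

theorem rhoR_nonneg : 0 ≤ rhoR E β v := le_max_left _ _

theorem outMax_sub_inMax_le_rhoR : outMax E β v - inMax E β v ≤ rhoR E β v := le_max_right _ _

theorem sum_rhoR_mono {s t : Finset V} (h : s ⊆ t) :
    ∑ q ∈ s, rhoR E β q ≤ ∑ q ∈ t, rhoR E β q :=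
  Finset.sum_le_sum_of_subset_of_nonneg h fun _ _ _ => rhoR_nonneg

theorem rhoR_eq_zero_iff : rhoR E β v = 0 ↔ outMax E β v ≤ inMax E β v := by
  rw [rhoR, max_eq_left_iff, sub_nonpos]

variable [Finite V]

theorem finite_inWeights (E : V → V → Prop) (β : V → V → ℝ) (v : V) :
    {x : ℝ | ∃ u, E u v ∧ x = β u v}.Finite :=
  (Set.finite_range fun u => β u v).subset fun _ ⟨u, _, hx⟩ => ⟨u, hx.symm⟩

theorem le_inMax_s15 (β : V → V → ℝ) (h : E u v) : β u v ≤ inMax E β v :=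
  le_csSup (finite_inWeights E β v).bddAbove ⟨u, h, rfl⟩

theorem exists_inMax_eq (hv : ∃ u, E u v) (β : V → V → ℝ) : ∃ u, E u v ∧ inMax E β v = β u v :=
  have hne : {x : ℝ | ∃ u, E u v ∧ x = β u v}.Nonempty :=
    let ⟨u, huv⟩ := hv
    ⟨β u v, u, huv, rfl⟩
  hne.csSup_mem (finite_inWeights E β v)

-- Outgoing edges are the incoming edges of the reversed graph.
theorem le_outMax_s15 (β : V → V → ℝ) (h : E v w) : β v w ≤ outMax E β v :=
  le_inMax_s15 (E := flip E) (flip β) h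

theorem exists_outMax_eq (hv : ∃ w, E v w) (β : V → V → ℝ) : ∃ w, E v w ∧ outMax E β v = β v w :=
  exists_inMax_eq (E := flip E) hv (flip β)

theorem IsRaisingBalanced.weight_le_inMax (hβ : IsRaisingBalanced E β) (h : E v w) :
    β v w ≤ inMax E β v :=
  (le_outMax_s15 β h).trans (rhoR_eq_zero_iff.1 (hβ v))

theorem isRaisingBalanced_of_forall_edge (hout : ∀ v, ∃ w, E v w)
    (h : ∀ v w, E v w → ∃ u, E u v ∧ β v w ≤ β u v) : IsRaisingBalanced E β := by
  intro v
  obtain ⟨w, hvw, hw⟩ := exists_outMax_eq (hout v) β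
  obtain ⟨u, huv, hle⟩ := h v w hvw
  exact rhoR_eq_zero_iff.2 (hw.trans_le (hle.trans (le_inMax_s15 β huv)))

theorem continuous_inMax (hv : ∃ u, E u v) : Continuous fun β => inMax E β v := by
  have hne : (Set.toFinite {u | E u v}).toFinset.Nonempty :=
    (Set.Finite.toFinset_nonempty _).2 hv
  have hsup (β : V → V → ℝ) :
      inMax E β v = (Set.toFinite {u | E u v}).toFinset.sup' hne fun u => β u v := by
    rw [Finset.sup'_eq_csSup_image, inMax]
    congr 1
    ext x
    simp [eq_comm]
  simp only [hsup]
  exact Continuous.finset_sup'_apply hne fun u _ => by fun_prop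

theorem continuous_outMax (hv : ∃ w, E v w) : Continuous fun β => outMax E β v :=
  (continuous_inMax (E := flip E) hv).comp (g := fun β => inMax (flip E) β v)
    (f := fun (β : V → V → ℝ) => flip β) (by unfold flip; fun_prop)

theorem continuous_rhoR (hout : ∃ w, E v w) (hin : ∃ u, E u v) :
    Continuous fun β => rhoR E β v :=
  continuous_const.max ((continuous_outMax hout).sub (continuous_inMax hin))

end Imbalance

section RaisingLimit

variable {E : V → V → Prop} {α : V → V → ℝ} {r s : V → ℝ}

theorem alphaR_alphaR : alphaR (alphaR α r) s = alphaR α (r + s) := by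
  ext a b
  simp only [alphaR, Pi.add_apply]
  ring

theorem continuous_alphaR (α : V → V → ℝ) : Continuous (alphaR α) := by
  unfold alphaR
  fun_prop

theorem exists_fair [Finite V] [Nonempty V] : ∃ σ : ℕ → V, Fair σ := by
  obtain ⟨f, hf⟩ := exists_surjective_nat V
  refine ⟨fun t => f t.unpair.1, fun v N => ?_⟩
  obtain ⟨k, rfl⟩ := hf v
  exact ⟨Nat.pair k N, Nat.right_le_pair k N, by simp⟩

theorem Fair.frequently {σ : ℕ → V} (hσ : Fair σ) (v : V) : ∃ᶠ t in atTop, σ t = v :=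
  frequently_atTop.2 (hσ v)

theorem half_rhoR_le_sub_of_le [Finite V] (hout : ∀ v, ∃ w, E v w) (hin : ∀ v, ∃ u, E u v)
    (hr : IsRaisingBalanced E (alphaR α r)) (hsr : s ≤ r) (v : V) :
    rhoR E (alphaR α s) v / 2 ≤ r v - s v := by
  obtain ⟨w, hvw, hw⟩ := exists_outMax_eq (hout v) (alphaR α s)
  obtain ⟨u, huv, hu⟩ := exists_inMax_eq (hin v) (alphaR α r)
  have hbal := hr.weight_le_inMax hvw
  have hle := le_inMax_s15 (alphaR α s) huv
  rw [hu] at hbal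
  have hρ : rhoR E (alphaR α s) v ≤ 2 * (r v - s v) := by
    refine max_le (by linarith [hsr v]) ?_
    rw [hw]
    simp only [alphaR] at hbal hle ⊢
    linarith [hsr u, hsr w]
  linarith

variable [DecidableEq V]

theorem raiseOp_eq_alphaR (E : V → V → Prop) (β : V → V → ℝ) (v : V) :
    raiseOp E β v = alphaR β (Pi.single v (rhoR E β v / 2)) := by
  rw [raiseOp]
  split_ifs with h
  · have hρ : rhoR E β v = outMax E β v - inMax E β v :=
      max_eq_right ((lt_max_iff.1 h).resolve_left (lt_irrefl 0)).le
    ext a b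
    simp only [balanceAt, alphaR, hρ, Pi.single_apply]
  · ext a b
    simp [alphaR, le_antisymm (not_lt.1 h) rhoR_nonneg]

theorem raiseIter_eq_alphaR_rvec (E : V → V → Prop) (α : V → V → ℝ) (σ : ℕ → V) (t : ℕ) :
    raiseIter E α σ t = alphaR α (rvec E α σ t) := by
  induction t with
  | zero => ext; simp [raiseIter, alphaR, rvec]
  | succ t ih =>
    rw [raiseIter, raiseOp_eq_alphaR, ih, alphaR_alphaR]
    congr 1
    ext u
    simp only [rvec, ih, Pi.add_apply, Pi.single_apply]

theorem rvec_succ (E : V → V → Prop) (α : V → V → ℝ) (σ : ℕ → V) (t : ℕ) :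
    rvec E α σ (t + 1) =
      rvec E α σ t + Pi.single (σ t) (rhoR E (alphaR α (rvec E α σ t)) (σ t) / 2) := by
  ext u
  simp only [rvec, raiseIter_eq_alphaR_rvec, Pi.add_apply, Pi.single_apply]

theorem rvec_nonneg (E : V → V → Prop) (α : V → V → ℝ) (σ : ℕ → V) (t : ℕ) :
    0 ≤ rvec E α σ t := by
  induction t with
  | zero => exact le_rfl
  | succ t ih =>
    rw [rvec_succ]
    exact add_nonneg ih (Pi.single_nonneg.2 (div_nonneg rhoR_nonneg zero_le_two))

theorem rvec_le_of_mem_balancingVectors [Finite V] (hout : ∀ v, ∃ w, E v w)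
    (hin : ∀ v, ∃ u, E u v) (hr : r ∈ balancingVectors E α) (σ : ℕ → V) (t : ℕ) :
    rvec E α σ t ≤ r := by
  induction t with
  | zero => exact hr.1
  | succ t ih =>
    intro v
    rw [rvec_succ, Pi.add_apply]
    obtain rfl | hv := eq_or_ne v (σ t)
    · rw [Pi.single_eq_same]
      linarith [half_rhoR_le_sub_of_le hout hin hr.2 ih (σ t)]
    · rw [Pi.single_eq_of_ne hv, add_zero]
      exact ih v

-- Each visit to `v` increases `rvec` at `v` by half the imbalance there, and these increments
-- tend to zero.
theorem isRaisingBalanced_of_tendsto_rvec [Finite V] (hout : ∀ v, ∃ w, E v w)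
    (hin : ∀ v, ∃ u, E u v) {σ : ℕ → V} (hσ : Fair σ)
    (hr : Tendsto (rvec E α σ) atTop (𝓝 r)) : IsRaisingBalanced E (alphaR α r) := by
  intro v
  have hρ : Tendsto (fun t => rhoR E (alphaR α (rvec E α σ t)) v) atTop
      (𝓝 (rhoR E (alphaR α r) v)) :=
    (((continuous_rhoR (hout v) (hin v)).comp (continuous_alphaR α)).tendsto r).comp hr
  have hrv := tendsto_pi_nhds.1 hr v
  have hstep : Tendsto (fun t => rvec E α σ (t + 1) v - rvec E α σ t v) atTop (𝓝 0) := by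
    simpa using (hrv.comp (tendsto_add_atTop_nat 1)).sub hrv
  have hvisit : ∃ᶠ t in atTop, rhoR E (alphaR α (rvec E α σ t)) v / 2 -
      (rvec E α σ (t + 1) v - rvec E α σ t v) ∈ ({0} : Set ℝ) := by
    refine (hσ.frequently v).mono ?_
    rintro t rfl
    simp [rvec_succ]
  have hzero := isClosed_singleton.mem_of_frequently_of_tendsto hvisit
    ((hρ.div_const 2).sub hstep)
  simpa using hzero

theorem isLeast_balancingVectors_of_tendsto_rvec [Finite V] (hout : ∀ v, ∃ w, E v w)
    (hin : ∀ v, ∃ u, E u v) {σ : ℕ → V} (hσ : Fair σ)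
    (hr : Tendsto (rvec E α σ) atTop (𝓝 r)) : IsLeast (balancingVectors E α) r :=
  ⟨⟨ge_of_tendsto' hr (rvec_nonneg E α σ), isRaisingBalanced_of_tendsto_rvec hout hin hσ hr⟩,
    fun _ hs => le_of_tendsto' hr (rvec_le_of_mem_balancingVectors hout hin hs σ)⟩

end RaisingLimit

theorem exists_closed_subset_forall_exists_pred {X : Type*} [Finite X] (T : X → X → Prop)
    {D₀ : Set X} (hne : D₀.Nonempty) (hD₀ : ∀ u ∈ D₀, ∀ w, T u w → w ∈ D₀) :
    ∃ D ⊆ D₀, D.Nonempty ∧ ∀ u ∈ D, ∀ w, T u w → w ∈ D ∧ ∃ p ∈ D, T p u := by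
  obtain ⟨D, hDD₀, ⟨hDne, hD⟩, hmin⟩ := exists_minimal_le_of_wellFoundedLT
    (fun D : Set X => D.Nonempty ∧ ∀ u ∈ D, ∀ w, T u w → w ∈ D) D₀ ⟨hne, hD₀⟩
  refine ⟨D, hDD₀, hDne, fun u hu w huw => ⟨hD u hu w huw, ?_⟩⟩
  -- Otherwise `D \ {u}` would be a smaller nonempty closed set.
  by_contra! hpred
  have hw : w ∈ D \ {u} := ⟨hD u hu w huw, fun h : w = u => hpred u hu (h ▸ huw)⟩
  have hclosed : ∀ p ∈ D \ {u}, ∀ q, T p q → q ∈ D \ {u} := fun p hp q hpq =>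
    ⟨hD p hp.1 q hpq, fun h : q = u => hpred p hp.1 (h ▸ hpq)⟩
  exact (hmin ⟨⟨w, hw⟩, hclosed⟩ Set.sdiff_subset hu).2 rfl

section LeastVector

variable {E : V → V → Prop} {α β : V → V → ℝ} {r : V → ℝ}

theorem exists_pos_forall_add_le_inMax [Finite V] (E : V → V → Prop) (β : V → V → ℝ) :
    ∃ δ > 0, ∀ u w, β u w < inMax E β u → β u w + δ ≤ inMax E β u := by
  obtain ⟨δ, hδ, h⟩ := Pi.exists_forall_pos_add_lt
    (x := fun e : {e : V × V // β e.1 e.2 < inMax E β e.1} => β e.1.1 e.1.2)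
    (y := fun e => inMax E β e.1.1) fun e => e.2
  exact ⟨δ, hδ, fun u w huw => (h ⟨(u, w), huw⟩).le⟩

-- A heaviest edge out of `D` ends in `D` and so keeps its weight, as does some heaviest edge
-- entering from `D`. The other edges have slack `2 * ε`, which pays for the change at both ends.
theorem isRaisingBalanced_alphaR_neg_indicator [Finite V] (hout : ∀ v, ∃ w, E v w)
    (hin : ∀ v, ∃ u, E u v) (hβ : IsRaisingBalanced E β) {D : Set V}
    (hD : ∀ u ∈ D, ∀ w, E u w → β u w = inMax E β u →
      w ∈ D ∧ ∃ p ∈ D, E p u ∧ β p u = inMax E β u) {ε : ℝ} (hε : 0 ≤ ε)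
    (hgap : ∀ u w, β u w < inMax E β u → β u w + 2 * ε ≤ inMax E β u) :
    IsRaisingBalanced E (alphaR β (-D.indicator fun _ => ε)) := by
  refine isRaisingBalanced_of_forall_edge hout fun v w hvw => ?_
  have hind_nonneg (q : V) : 0 ≤ D.indicator (fun _ => ε) q :=
    Set.indicator_nonneg (fun _ _ => hε) q
  obtain ⟨p₀, hp₀v, hp₀⟩ := exists_inMax_eq (hin v) β
  have hle := hβ.weight_le_inMax hvw
  simp only [alphaR, Pi.neg_apply]
  by_cases hv : v ∈ D
  · rw [Set.indicator_of_mem hv]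
    obtain htight | hslack := hle.eq_or_lt
    · obtain ⟨hw, p, hp, hpv, hpeq⟩ := hD v hv w hvw htight
      refine ⟨p, hpv, ?_⟩
      rw [Set.indicator_of_mem hw, Set.indicator_of_mem hp]
      linarith
    · exact ⟨p₀, hp₀v, by linarith [hgap v w hslack, hind_nonneg w, hind_nonneg p₀]⟩
  · rw [Set.indicator_of_notMem hv]
    exact ⟨p₀, hp₀v, by linarith [hind_nonneg w, hind_nonneg p₀]⟩

theorem exists_pos_sub_indicator_mem_balancingVectors [Finite V] (hout : ∀ v, ∃ w, E v w)
    (hin : ∀ v, ∃ u, E u v) (hr : r ∈ balancingVectors E α) {D : Set V}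
    (hpos : ∀ u ∈ D, 0 < r u)
    (hD : ∀ u ∈ D, ∀ w, E u w → alphaR α r u w = level E α r u →
      w ∈ D ∧ ∃ p ∈ D, E p u ∧ alphaR α r p u = level E α r u) :
    ∃ ε > 0, r - D.indicator (fun _ => ε) ∈ balancingVectors E α := by
  obtain ⟨δ, hδ, hgap⟩ := exists_pos_forall_add_le_inMax E (alphaR α r)
  obtain ⟨η, hη, hrη⟩ := Pi.exists_forall_pos_add_lt (x := fun _ : D => 0)
    (y := fun u : D => r u) fun u => hpos u u.2
  have hε : 0 < min η (δ / 2) := lt_min hη (half_pos hδ)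
  have hle : D.indicator (fun _ => min η (δ / 2)) ≤ r :=
    Set.indicator_le' (fun u hu => by linarith [min_le_left η (δ / 2), hrη ⟨u, hu⟩])
      fun u _ => hr.1 u
  refine ⟨min η (δ / 2), hε, sub_nonneg.2 hle, ?_⟩
  rw [sub_eq_add_neg, ← alphaR_alphaR]
  refine isRaisingBalanced_alphaR_neg_indicator hout hin hr.2 hD hε.le fun u w huw => ?_
  linarith [min_le_right η (δ / 2), hgap u w huw]

theorem exists_edge_leaving_of_isLeast [Finite V] (hout : ∀ v, ∃ w, E v w)
    (hin : ∀ v, ∃ u, E u v) (hr : IsLeast (balancingVectors E α) r) {S : Set V}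
    (hpos : ∀ u ∈ S, 0 < r u) {m : V} (hm : m ∈ S)
    (hmax : ∀ u ∈ S, level E α r u ≤ level E α r m) :
    ∃ u ∈ S, ∃ w ∉ S, E u w ∧ level E α r m ≤ alphaR α r u w := by
  by_contra! hcon
  let T (u w : V) : Prop := E u w ∧ alphaR α r u w = level E α r m
  let D₀ : Set V := {u ∈ S | level E α r u = level E α r m}
  have hclosed : ∀ u ∈ D₀, ∀ w, T u w → w ∈ D₀ := by
    rintro u ⟨hu, -⟩ w ⟨huw, hT⟩
    have hw : w ∈ S := by_contra fun hw => (hcon u hu w hw huw).ne hT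
    exact ⟨hw, (hmax w hw).antisymm (hT.ge.trans (le_inMax_s15 (alphaR α r) huw))⟩
  obtain ⟨D, hDS, ⟨d, hd⟩, hD⟩ :=
    exists_closed_subset_forall_exists_pred T (D₀ := D₀) ⟨m, hm, rfl⟩ hclosed
  obtain ⟨ε, hε, hmem⟩ := exists_pos_sub_indicator_mem_balancingVectors hout hin hr.1
    (fun u hu => hpos u (hDS hu).1) (D := D) fun u hu w huw hw => by
      rw [(hDS hu).2] at hw ⊢
      exact hD u hu w ⟨huw, hw⟩
  have hrd : r d ≤ r d - D.indicator (fun _ => ε) d := hr.2 hmem d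
  rw [Set.indicator_of_mem hd] at hrd
  linarith

end LeastVector

theorem wellFounded_gt_comp {X Y : Type*} [Finite X] [Preorder Y] (f : X → Y) :
    WellFounded fun p q : X => f q < f p :=
  Finite.wellFounded_of_trans_of_irrefl (f ⁻¹'o (· > ·))

section HeightBound

open scoped Finset

variable [Fintype V] {E : V → V → Prop} {α : V → V → ℝ} {r : V → ℝ}

-- If `inMax E α u > x`, the heaviest edge `(p, u)` has `r u < r p` because the level of `u` is at
-- most `x`; follow such edges backwards, paying `rhoR E α` at each vertex.
theorem outMax_sub_le_sum_rhoR (hin : ∀ v, ∃ u, E u v) {x : ℝ} (u : V)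
    (hx : ∀ q, r u ≤ r q → level E α r q ≤ x) :
    outMax E α u - x ≤ ∑ q with r u ≤ r q, rhoR E α q := by
  induction u using (wellFounded_gt_comp r).induction with
  | _ u ih =>
  have hρ : outMax E α u - inMax E α u ≤ rhoR E α u := outMax_sub_inMax_le_rhoR
  have hu : u ∈ ({q | r u ≤ r q} : Finset V) := by simp
  obtain hle | hlt := le_or_gt (inMax E α u) x
  · have hsingle := Finset.single_le_sum (f := rhoR E α) (fun _ _ => rhoR_nonneg) hu
    linarith
  · obtain ⟨p, hpu, hp⟩ := exists_inMax_eq (hin u) α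
    have hrp : r u < r p := by
      have hlevel : α p u + r u - r p ≤ x := (le_inMax_s15 (alphaR α r) hpu).trans (hx u le_rfl)
      linarith
    have hsum : rhoR E α u + ∑ q with r p ≤ r q, rhoR E α q ≤ ∑ q with r u ≤ r q, rhoR E α q := by
      classical
      rw [← Finset.sum_insert (by simpa using hrp)]
      exact sum_rhoR_mono (Finset.insert_subset hu
        (Finset.monotone_filter_right _ fun q _ hq => hrp.le.trans hq))
    linarith [ih p hrp fun q hq => hx q (hrp.le.trans hq), le_outMax_s15 α hpu]

theorem exists_gt_sub_le_sum_rhoR (hout : ∀ v, ∃ w, E v w) (hin : ∀ v, ∃ u, E u v)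
    (hr : IsLeast (balancingVectors E α) r) {v : V} (hne : ∃ u, r v < r u) :
    ∃ u, r v < r u ∧ r u - r v ≤ ∑ q with r v < r q, rhoR E α q := by
  obtain ⟨m, hm, hmax⟩ := Set.exists_max_image {u | r v < r u} (level E α r) (Set.toFinite _) hne
  have hpos : ∀ u ∈ {u | r v < r u}, 0 < r u := fun u hu => (hr.1.1 v).trans_lt hu
  obtain ⟨u, hu, w, hw, huw, hlevel⟩ := exists_edge_leaving_of_isLeast hout hin hr hpos hm hmax
  refine ⟨u, hu, ?_⟩
  have hwv : r w ≤ r v := not_lt.1 hw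
  have hchain := outMax_sub_le_sum_rhoR hin u fun q hq => hmax q (hu.trans_le hq)
  calc r u - r v ≤ outMax E α u - level E α r m := by
        simp only [alphaR] at hlevel
        linarith [le_outMax_s15 α huw]
    _ ≤ ∑ q with r u ≤ r q, rhoR E α q := hchain
    _ ≤ ∑ q with r v < r q, rhoR E α q :=
        sum_rhoR_mono (Finset.monotone_filter_right _ fun q _ hq => hu.trans_le hq)

theorem sub_le_card_mul_sum_rhoR (hout : ∀ v, ∃ w, E v w) (hin : ∀ v, ∃ u, E u v)
    (hr : IsLeast (balancingVectors E α) r) (m v : V) :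
    r m - r v ≤ (#{q | r v < r q} : ℝ) * ∑ q with r v < r q, rhoR E α q := by
  induction v using (wellFounded_gt_comp r).induction with
  | _ v ih =>
  by_cases hne : ∃ u, r v < r u
  · obtain ⟨u, hu, hgap⟩ := exists_gt_sub_le_sum_rhoR hout hin hr hne
    have hss : ({q | r u < r q} : Finset V) ⊂ ({q | r v < r q} : Finset V) := by
      refine Finset.ssubset_iff_of_subset ?_ |>.2 ⟨u, by simpa using hu, by simp⟩
      exact Finset.monotone_filter_right _ fun q _ hq => hu.trans hq
    have hcard : (#{q | r u < r q} + 1 : ℝ) ≤ #{q | r v < r q} := by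
      exact_mod_cast Finset.card_lt_card hss
    calc r m - r v = (r m - r u) + (r u - r v) := by ring
      _ ≤ (#{q | r u < r q} : ℝ) * ∑ q with r u < r q, rhoR E α q +
          ∑ q with r v < r q, rhoR E α q := add_le_add (ih u hu) hgap
      _ ≤ (#{q | r u < r q} : ℝ) * ∑ q with r v < r q, rhoR E α q +
          ∑ q with r v < r q, rhoR E α q := by
        gcongr _ * ?_ + _
        exact sum_rhoR_mono hss.subset
      _ = (#{q | r u < r q} + 1 : ℝ) * ∑ q with r v < r q, rhoR E α q := by ring
      _ ≤ (#{q | r v < r q} : ℝ) * ∑ q with r v < r q, rhoR E α q := by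
        gcongr
        exact Finset.sum_nonneg fun _ _ => rhoR_nonneg
  · have hmv : r m ≤ r v := not_lt.1 fun h => hne ⟨m, h⟩
    have hnonneg : 0 ≤ (#{q | r v < r q} : ℝ) * ∑ q with r v < r q, rhoR E α q :=
      mul_nonneg (Nat.cast_nonneg _) (Finset.sum_nonneg fun _ _ => rhoR_nonneg)
    linarith

end HeightBound

theorem height_global_bound_general
    [Fintype V] [Nonempty V] [DecidableEq V] (E : V → V → Prop)
    (hout : ∀ v, ∃ w, E v w) (hin : ∀ v, ∃ u, E u v) (α : V → V → ℝ) {σ : ℕ → V} (hσ : Fair σ)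
    (rstar : V → ℝ) (hrstar : ∀ v, Tendsto (fun t => rvec E α σ t v) atTop (𝓝 (rstar v))) (v : V) :
    height rstar v - Finset.univ.inf' Finset.univ_nonempty (height rstar) ≤
      ((Finset.univ.filter fun u => height rstar u < height rstar v).card : ℝ) *
        ∑ u ∈ Finset.univ.filter fun u => height rstar u < height rstar v,
          rhoR E α u := by
  have hleast : IsLeast (balancingVectors E α) rstar :=
    isLeast_balancingVectors_of_tendsto_rvec hout hin hσ (tendsto_pi_nhds.2 hrstar)
  obtain ⟨m, -, hm⟩ := Finset.exists_mem_eq_inf' Finset.univ_nonempty (height rstar)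
  rw [hm]
  simpa only [height, neg_sub_neg, neg_lt_neg_iff] using
    sub_le_card_mul_sum_rhoR hout hin hleast m v

open scoped Classical in
/-- `y_v − y_min ≤ |S_v| · ρ(S_v)`, where
`S_v = {u : y_u < y_v}` and `ρ(S_v) = ∑_{u ∈ S_v} ρ_u^R`. -/
theorem height_global_bound
    [Fintype V] [Nonempty V] [DecidableEq V] (E : V → V → Prop)
    (hout : ∀ v, ∃ w, E v w) (hin : ∀ v, ∃ u, E u v)
    (hconn : ∀ u v : V, Relation.ReflTransGen E u v)
    (α : V → V → ℝ) (rstar : V → ℝ)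
    (hrstar : ∀ σ : ℕ → V, Fair σ → ∀ v,
      Tendsto (fun t => rvec E α σ t v) atTop (nhds (rstar v)))
    (v : V) :
    height rstar v - Finset.univ.inf' Finset.univ_nonempty (height rstar) ≤
      ((Finset.univ.filter fun u => height rstar u < height rstar v).card : ℝ) *
        ∑ u ∈ Finset.univ.filter fun u => height rstar u < height rstar v,
          rhoR E α u := by
  obtain ⟨σ, hσ⟩ := exists_fair (V := V)
  exact height_global_bound_general E hout hin α hσ rstar (hrstar σ hσ) v
end
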